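/- Let f(x) = Σ_{i=0}^{n-1} a_i x^{q^i} be a q-polynomial over F_{q^n}. Then D_f = { Tr_{q^n/q}(x)/x : x ∈ F_{q^n}, x ≠ 0 } (equivalently, the linear set L_f of PG(1,q^n) coincides with the linear set defined by the subspace {(x, Tr_{q^n/q}(x)) : x ∈ F_{q^n}}) if and only if there exists λ ∈ F_{q^n} with λ ≠ 0 such that λ·f(x) = Tr_{q^n/q}(λx) for all x ∈ F_{q^n}. -/

import Mathlib

/-!
If `f` is additive, the nonzero `x` with `f x / x = y` form a nontrivial subgroup of `F` with `0`
removed, so each direction `y` is attained `-1` times in `F`. Hence every sum `∑ x, h (f x / x)` is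
determined by the set of directions. For `h y = y ^ (q ^ t₁ + ⋯ + q ^ tₘ)` with distinct `tⱼ < n`,
expanding `f` and comparing base-`q` digits identifies this sum with minus a principal `m × m`
permanental minor of the Dickson matrix of `f`, whose `j`-th column lists the coefficients of
`f ^ q ^ j`.

For the trace the Dickson matrix is the all-ones matrix. A matrix `M` with the same principal
permanental minors of orders `1`, `2` and `3` satisfies `M i i = 1`, `M i j * M j i = 1`, and its
two `3`-cycle products on `i, j, k` have sum `2` and product `1`, so both equal `1`; therefore
`M i j * M j k = M i k`. For a Dickson matrix this says that any nonzero value `y` of `f` satisfies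
`y ^ q ^ j * a j = y`, and `y⁻¹` is the required multiplier.
-/

open Finset Matrix Nat

section Digits

variable {n q : ℕ}

/-- The number whose base-`q` expansion, before carrying, has `s.count i` as its `i`-th digit. -/
def powSum (q : ℕ) (s : Multiset (Fin n)) : ℕ :=
  (s.map fun i : Fin n => q ^ (i : ℕ)).sum

theorem powSum_pos (hq : 0 < q) {s : Multiset (Fin n)} (hs : s ≠ 0) : 0 < powSum q s := by
  obtain ⟨i, hi⟩ := Multiset.exists_mem_of_ne_zero hs
  exact (Nat.pow_pos hq).trans_le
    (Multiset.single_le_sum (fun _ _ => Nat.zero_le _) _ (Multiset.mem_map_of_mem _ hi))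

theorem powSum_eq_finFunctionFinEquiv {s : Multiset (Fin n)} (hs : ∀ i, s.count i < q) :
    powSum q s = finFunctionFinEquiv fun i => (⟨s.count i, hs i⟩ : Fin q) := by
  rw [powSum, sum_multiset_map_count, finFunctionFinEquiv_apply]
  refine sum_subset (subset_univ _) fun i _ hi => ?_
  rw [Multiset.count_eq_zero_of_notMem (mt Multiset.mem_toFinset.2 hi), zero_smul]

theorem eq_of_powSum_modEq_of_count_lt {s t : Multiset (Fin n)} (hs0 : s ≠ 0) (ht0 : t ≠ 0)
    (hs : ∀ i, s.count i < q) (ht : ∀ i, t.count i < q)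
    (h : powSum q s ≡ powSum q t [MOD q ^ n - 1]) : s = t := by
  obtain ⟨i, -⟩ := Multiset.exists_mem_of_ne_zero hs0
  have hq : 0 < q := (Nat.zero_le _).trans_lt (hs i)
  have hs_pos := powSum_pos hq hs0
  have ht_pos := powSum_pos hq ht0
  have hs_eq := powSum_eq_finFunctionFinEquiv hs
  have ht_eq := powSum_eq_finFunctionFinEquiv ht
  have hs_lt : powSum q s < q ^ n := hs_eq ▸ Fin.isLt _
  have ht_lt : powSum q t < q ^ n := ht_eq ▸ Fin.isLt _
  have h_pred : powSum q s - 1 ≡ powSum q t - 1 [MOD q ^ n - 1] :=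
    Nat.ModEq.add_right_cancel' 1 (by
      simpa only [Nat.sub_add_cancel hs_pos, Nat.sub_add_cancel ht_pos] using h)
  have h_eq : powSum q s = powSum q t := by
    have := h_pred.eq_of_lt_of_lt (Nat.sub_lt_sub_right hs_pos hs_lt)
      (Nat.sub_lt_sub_right ht_pos ht_lt)
    omega
  rw [hs_eq, ht_eq, Fin.val_inj, finFunctionFinEquiv.apply_eq_iff_eq] at h_eq
  exact Multiset.ext.2 fun i => congrArg Fin.val (congrFun h_eq i)

theorem pow_mod_modEq (hq : 0 < q) (m : ℕ) : q ^ (m % n) ≡ q ^ m [MOD q ^ n - 1] := by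
  have hn : 1 ≡ q ^ n [MOD q ^ n - 1] := (Nat.modEq_sub (Nat.one_le_pow n q hq)).symm
  conv_rhs => rw [← Nat.mod_add_div m n, pow_add, pow_mul]
  simpa using (hn.pow (m / n)).mul_left (q ^ (m % n))

variable [NeZero n]

-- Carrying: `q` copies of the exponent `i` are replaced by one copy of `i + 1`, cyclically.
theorem exists_powSum_modEq_of_le_count (hq : 1 < q) {s : Multiset (Fin n)} {i : Fin n}
    (hi : q ≤ s.count i) :
    ∃ s' : Multiset (Fin n), s' ≠ 0 ∧ s'.card < s.card ∧
      powSum q s' ≡ powSum q s [MOD q ^ n - 1] := by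
  obtain ⟨r, rfl⟩ := Multiset.le_iff_exists_add.1 (Multiset.le_count_iff_replicate_le.1 hi)
  refine ⟨{i + 1} + r, by simp, by simp; omega, ?_⟩
  have h_carry : q ^ ((i + 1 : Fin n) : ℕ) ≡ q * q ^ (i : ℕ) [MOD q ^ n - 1] := by
    have h := pow_mod_modEq (n := n) (zero_lt_of_lt hq) (i + 1)
    rwa [pow_succ', ← Nat.add_mod_mod, ← Fin.val_one', ← Fin.val_add] at h
  simpa [powSum] using h_carry.add_right (powSum q r)

theorem eq_of_powSum_modEq (hq : 1 < q) {s t : Multiset (Fin n)} (hs0 : s ≠ 0)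
    (hcard : s.card ≤ t.card) (ht : ∀ i, t.count i < q)
    (h : powSum q s ≡ powSum q t [MOD q ^ n - 1]) : s = t := by
  induction hm : s.card using Nat.strong_induction_on generalizing s with
  | _ m ih =>
    by_cases hs : ∀ i, s.count i < q
    · have ht0 : t ≠ 0 := by
        rintro rfl
        exact hs0 (by simpa using hcard)
      exact eq_of_powSum_modEq_of_count_lt hs0 ht0 hs ht h
    · obtain ⟨i, hi⟩ := not_forall.1 hs
      obtain ⟨s', hs'0, hs'card, hs'⟩ := exists_powSum_modEq_of_le_count hq (not_lt.1 hi)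
      have : s' = t := ih _ (hm ▸ hs'card) hs'0 (hs'card.le.trans hcard) (hs'.trans h) rfl
      exact absurd (this ▸ hs'card) hcard.not_gt

theorem sum_pow_modEq_iff {ι : Type*} [Fintype ι] (hq : 1 < q) {s t : ι → Fin n}
    (ht : Function.Injective t) :
    ∑ j, q ^ (s j : ℕ) ≡ ∑ j, q ^ (t j : ℕ) [MOD q ^ n - 1] ↔
      ∃ σ : Equiv.Perm ι, s = t ∘ σ := by
  constructor
  · intro h
    rcases isEmpty_or_nonempty ι with _ | _
    · exact ⟨1, Subsingleton.elim _ _⟩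
    have ht_nodup : (univ.val.map t).Nodup := univ.nodup.map ht
    have h_map : univ.val.map s = univ.val.map t :=
      eq_of_powSum_modEq hq (by simp [univ_nonempty.ne_empty]) (by simp)
        (fun i => (Multiset.nodup_iff_count_le_one.1 ht_nodup i).trans_lt hq)
        (by simpa [powSum] using h)
    have h_mem (j : ι) : ∃ k, t k = s j := by
      have : s j ∈ univ.val.map s := Multiset.mem_map_of_mem s (mem_univ j)
      simpa [h_map] using this
    choose σ hσ using h_mem
    have hs : Function.Injective s := fun i j =>
      Multiset.inj_on_of_nodup_map (h_map ▸ ht_nodup) i (mem_univ i) j (mem_univ j)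
    have hσ_inj : Function.Injective σ := fun i j hij => hs (by rw [← hσ i, ← hσ j, hij])
    exact ⟨.ofBijective σ (Finite.injective_iff_bijective.1 hσ_inj), funext fun j => (hσ j).symm⟩
  · rintro ⟨σ, rfl⟩
    exact congrArg (· % _) (Equiv.sum_comp σ fun j => q ^ (t j : ℕ))

end Digits

section Permanent

theorem permanent_fin_two {R : Type*} [CommSemiring R] (M : Matrix (Fin 2) (Fin 2) R) :
    M.permanent = M 0 0 * M 1 1 + M 0 1 * M 1 0 := by
  simp only [permanent, ← Equiv.Perm.decomposeFin.symm.sum_comp, Fintype.sum_prod_type,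
    Fin.sum_univ_succ, Fin.prod_univ_succ, univ_unique, sum_singleton]
  simp [mul_comm (M 1 0)]

theorem permanent_fin_three {R : Type*} [CommSemiring R] (M : Matrix (Fin 3) (Fin 3) R) :
    M.permanent = M 0 0 * M 1 1 * M 2 2 + M 0 0 * M 1 2 * M 2 1 + M 0 1 * M 1 0 * M 2 2 +
      M 0 1 * M 1 2 * M 2 0 + M 0 2 * M 1 0 * M 2 1 + M 0 2 * M 1 1 * M 2 0 := by
  simp only [permanent, ← Equiv.Perm.decomposeFin.symm.sum_comp, Fintype.sum_prod_type,
    Fin.sum_univ_succ, Fin.prod_univ_succ, univ_unique, sum_singleton]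
  simp [Equiv.swap_apply_def]
  ring

variable {R : Type*} [CommRing R] [IsReduced R]

theorem eq_one_of_mul_eq_one_of_add_eq_two {u v : R} (hmul : u * v = 1) (hadd : u + v = 2) :
    u = 1 := by
  have hsq : (u - 1) ^ 2 = 0 := by linear_combination u * hadd - hmul
  exact sub_eq_zero.1 ((pow_eq_zero_iff two_ne_zero).1 hsq)

theorem diag_eq_one_and_mul_eq_of_permanent_submatrix {ι : Type*} {M : Matrix ι ι R}
    (hM : ∀ m ≤ 3, ∀ t : Fin m ↪ ι, (M.submatrix t t).permanent = m !) :
    (∀ i, M i i = 1) ∧ ∀ i j k, M i j * M j k = M i k := by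
  have h_diag (i : ι) : M i i = 1 := by
    simpa using hM 1 (by norm_num) ⟨fun _ => i, Function.injective_of_subsingleton _⟩
  have h_swap {i j : ι} (hij : i ≠ j) : M i j * M j i = 1 := by
    have h : M i i * M j j + M i j * M j i = (2 ! : ℕ) :=
      (permanent_fin_two _).symm.trans
        (hM 2 (by norm_num) ⟨![i, j], injective_pair_iff_ne.2 hij⟩)
    rw [h_diag, h_diag, factorial_two] at h
    linear_combination h
  have h_cycle {i j k : ι} (hij : i ≠ j) (hjk : j ≠ k) (hik : i ≠ k) :
      M i j * M j k * M k i = 1 := by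
    have ht : Function.Injective ![i, j, k] := by
      simp [Function.Injective, Fin.forall_fin_succ, *, Ne.symm]
    have h : M i i * M j j * M k k + M i i * M j k * M k j + M i j * M j i * M k k +
        M i j * M j k * M k i + M i k * M j i * M k j + M i k * M j j * M k i = (3 ! : ℕ) :=
      (permanent_fin_three _).symm.trans (hM 3 le_rfl ⟨![i, j, k], ht⟩)
    have h_add : M i j * M j k * M k i + M i k * M k j * M j i = 2 := by
      simp only [h_diag, factorial] at h
      linear_combination h - h_swap hij - h_swap hjk - h_swap hik
    refine eq_one_of_mul_eq_one_of_add_eq_two ?_ h_add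
    calc M i j * M j k * M k i * (M i k * M k j * M j i)
        = (M i j * M j i) * (M j k * M k j) * (M i k * M k i) := by ring
      _ = 1 := by rw [h_swap hij, h_swap hjk, h_swap hik, one_mul, one_mul]
  refine ⟨h_diag, fun i j k => ?_⟩
  by_cases hij : i = j
  · rw [hij, h_diag, one_mul]
  by_cases hjk : j = k
  · rw [hjk, h_diag, mul_one]
  by_cases hik : i = k
  · rw [← hik, h_swap hij, h_diag]
  linear_combination M i k * h_cycle hij hjk hik - M i j * M j k * h_swap hik

end Permanent

section Directions

variable {F : Type*} [Field F]

/-- The set `D_f` of directions determined by `f`, i.e. the slopes of the lines through the origin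
and a point `(x, f x)` with `x ≠ 0`. -/
def directions (f : F → F) : Set F :=
  {y | ∃ x, x ≠ 0 ∧ f x / x = y}

theorem coe_image_div_eq_directions [Fintype F] [DecidableEq F] (f : F → F) :
    (univ.image fun x : Fˣ => f x / x : Finset F) = directions f := by
  ext y
  simp only [coe_image, coe_univ, Set.image_univ, Set.mem_range, directions, Set.mem_ofPred_eq]
  exact ⟨fun ⟨x, hx⟩ => ⟨x, x.ne_zero, hx⟩, fun ⟨x, hx0, hx⟩ => ⟨Units.mk0 x hx0, hx⟩⟩

theorem directions_subset_of_forall_mul_eq {f g : F → F} {l : F} (hl : l ≠ 0)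
    (h : ∀ x, l * f x = g (l * x)) : directions f ⊆ directions g := by
  rintro _ ⟨x, hx, rfl⟩
  exact ⟨l * x, mul_ne_zero hl hx, by rw [← h, mul_div_mul_left _ _ hl]⟩

theorem directions_eq_of_forall_mul_eq {f g : F → F} {l : F} (hl : l ≠ 0)
    (h : ∀ x, l * f x = g (l * x)) : directions f = directions g := by
  refine (directions_subset_of_forall_mul_eq hl h).antisymm
    (directions_subset_of_forall_mul_eq (inv_ne_zero hl) fun x => ?_)
  rw [inv_mul_eq_iff_eq_mul₀ hl, h, mul_inv_cancel_left₀ hl]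

theorem natCast_card_addSubgroup_eq_zero {R : Type*} [Ring R] [NoZeroDivisors R]
    (H : AddSubgroup R) {x : R} (hx : x ∈ H) (hx0 : x ≠ 0) : (Nat.card H : R) = 0 := by
  have h : Nat.card H • (⟨x, hx⟩ : H) = 0 := card_nsmul_eq_zero'
  have h' : (Nat.card H : R) * x = 0 := by
    rw [← nsmul_eq_mul]
    exact congrArg Subtype.val h
  exact (mul_eq_zero.1 h').resolve_right hx0

variable [Fintype F] [DecidableEq F]

theorem natCast_card_units_div_eq (f : F →+ F) {y : F} (hy : y ∈ directions f) :
    (#{x : Fˣ | f x / x = y} : F) = -1 := by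
  obtain ⟨x₀, hx₀, hx₀y⟩ := hy
  let g : F →+ F := f - AddMonoidHom.mulLeft y
  have hg {x : F} (hx : x ≠ 0) : x ∈ g.ker ↔ f x / x = y := by
    simp [g, AddMonoidHom.mem_ker, sub_eq_zero, div_eq_iff hx]
  let fibre : Finset F :=
    (univ.filter fun x : Fˣ => f x / x = y).map ⟨Units.val, Units.val_injective⟩
  have h_zero : 0 ∉ fibre := by simp [fibre]
  have h_mem (x : F) : x ∈ fibre.cons 0 h_zero ↔ x ∈ g.ker := by
    rcases eq_or_ne x 0 with rfl | hx
    · simp [g.ker.zero_mem]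
    · simp only [mem_cons, hx, hg hx, false_or, fibre, mem_map, mem_filter_univ]
      exact ⟨fun ⟨_, hu, hux⟩ => hux ▸ hu, fun h => ⟨Units.mk0 x hx, h, rfl⟩⟩
  have h_card : Nat.card g.ker = #{x : Fˣ | f x / x = y} + 1 := by
    rw [Nat.subtype_card _ h_mem, card_cons, card_map]
  rw [eq_neg_iff_add_eq_zero, ← Nat.cast_add_one, ← h_card]
  exact natCast_card_addSubgroup_eq_zero _ ((hg hx₀).2 hx₀y) hx₀

theorem sum_units_comp_div (f : F →+ F) (h : F → F) :
    ∑ x : Fˣ, h (f x / x) = -∑ᶠ y ∈ directions f, h y := by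
  rw [sum_comp h (fun x : Fˣ => f x / x), ← coe_image_div_eq_directions, finsum_mem_coe_finset,
    ← sum_neg_distrib]
  refine sum_congr rfl fun y hy => ?_
  rw [nsmul_eq_mul, natCast_card_units_div_eq f, neg_one_mul]
  rwa [← coe_image_div_eq_directions, mem_coe]

end Directions

section LinearizedPolynomial

variable {F : Type*} [Field F] {n q : ℕ}

/-- The `q`-polynomial function `x ↦ ∑ i, a i * x ^ q ^ i` with coefficients `a`. -/
def linearizedPoly (q : ℕ) (a : Fin n → F) (x : F) : F :=
  ∑ i, a i * x ^ q ^ (i : ℕ)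

/-- The Dickson matrix of the `q`-polynomial with coefficients `a`: over a field with `q ^ n`
elements, its `j`-th column consists of the coefficients of the `q ^ j`-th power of that
polynomial. The subtraction of indices is modulo `n`. -/
def dicksonMatrix (q : ℕ) (a : Fin n → F) : Matrix (Fin n) (Fin n) F :=
  .of fun i j => a (i - j) ^ q ^ (j : ℕ)

variable [Fintype F]

theorem sum_units_pow_div_pow [DecidableEq F] (A B : ℕ) :
    ∑ x : Fˣ, (x : F) ^ A / (x : F) ^ B
      = if A ≡ B [MOD Fintype.card F - 1] then -1 else 0 := by
  obtain ⟨m, hm⟩ : ∃ m, Fintype.card F - 1 = m + 1 :=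
    Nat.exists_eq_add_one.2 (Nat.sub_pos_of_lt Fintype.one_lt_card)
  have h_pow (x : Fˣ) : (x : F) ^ A / (x : F) ^ B = (x ^ (A + B * m) : F) := by
    rw [div_eq_iff (pow_ne_zero _ x.ne_zero), ← pow_add,
      show A + B * m + B = A + (m + 1) * B by ring, pow_add, pow_mul, ← hm,
      FiniteField.pow_card_sub_one_eq_one _ x.ne_zero, one_pow, mul_one]
  have h_cancel : B + B * m ≡ 0 [MOD m + 1] := Nat.modEq_zero_iff_dvd.2 ⟨B, by ring⟩
  simp only [h_pow]
  rw [FiniteField.sum_pow_units, hm]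
  refine if_congr (Nat.modEq_zero_iff_dvd.symm.trans ?_) rfl rfl
  exact ⟨fun h => (h.trans h_cancel.symm).add_right_cancel',
    fun h => (h.add_right _).trans h_cancel⟩

variable [NeZero n]

theorem one_lt_of_card_eq_pow (hF : Fintype.card F = q ^ n) : 1 < q :=
  (Nat.one_lt_pow_iff (NeZero.ne n)).1 (hF ▸ Fintype.one_lt_card)

theorem exists_ringHom_forall_apply_eq_pow (hF : Fintype.card F = q ^ n) (k : ℕ) :
    ∃ ψ : F →+* F, ∀ x, ψ x = x ^ q ^ k := by
  obtain ⟨p, hp_char, m, hp, hm⟩ := FiniteField.card' F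
  have hq : q ∣ p ^ (m : ℕ) := hm ▸ hF ▸ dvd_pow_self q (NeZero.ne n)
  obtain ⟨e, -, rfl⟩ := (Nat.dvd_prime_pow hp).1 hq
  have : Fact p.Prime := ⟨hp⟩
  exact ⟨iterateFrobenius F p (e * k), fun x => by rw [iterateFrobenius_def, pow_mul]⟩

theorem linearizedPoly_add (hF : Fintype.card F = q ^ n) (a : Fin n → F) (x y : F) :
    linearizedPoly q a (x + y) = linearizedPoly q a x + linearizedPoly q a y := by
  simp only [linearizedPoly, ← sum_add_distrib, ← mul_add]
  refine sum_congr rfl fun i _ => ?_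
  obtain ⟨ψ, hψ⟩ := exists_ringHom_forall_apply_eq_pow hF i
  simp only [← hψ, map_add]

theorem linearizedPoly_pow (hF : Fintype.card F = q ^ n) (a : Fin n → F) (j : Fin n) (x : F) :
    linearizedPoly q a x ^ q ^ (j : ℕ) = linearizedPoly q ((dicksonMatrix q a).col j) x := by
  have h_exp (i : Fin n) : x ^ q ^ ((i + j : Fin n) : ℕ) = (x ^ q ^ (i : ℕ)) ^ q ^ (j : ℕ) := by
    rw [← pow_mul, ← pow_add, Fin.val_add]
    conv_rhs => rw [← Nat.mod_add_div (i + j : ℕ) n, pow_add, pow_mul, pow_mul q n, ← hF,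
      FiniteField.pow_card_pow]
  obtain ⟨ψ, hψ⟩ := exists_ringHom_forall_apply_eq_pow hF j
  rw [linearizedPoly, linearizedPoly, ← hψ, map_sum]
  refine Fintype.sum_equiv (Equiv.addRight j) _ _ fun i => ?_
  simp [dicksonMatrix, hψ, h_exp, mul_pow]

-- `x` appears to the power `∑ j, q ^ t j` in the denominator, so the sum over `x` extracts the
-- terms of the expanded product whose exponents are a permutation of `t`.
theorem sum_units_prod_linearizedPoly_div_pow [DecidableEq F] (hF : Fintype.card F = q ^ n)
    {ι : Type*} [Fintype ι] [DecidableEq ι] (b : ι → Fin n → F) (t : ι ↪ Fin n) :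
    ∑ x : Fˣ, ∏ j, linearizedPoly q (b j) x / (x : F) ^ q ^ (t j : ℕ) =
      -(Matrix.of fun i j => b j (t i)).permanent := by
  have h_expand (x : Fˣ) : ∏ j, linearizedPoly q (b j) x / (x : F) ^ q ^ (t j : ℕ) =
      ∑ s : ι → Fin n, (∏ j, b j (s j)) *
        ((x : F) ^ (∑ j, q ^ (s j : ℕ)) / (x : F) ^ (∑ j, q ^ (t j : ℕ))) := by
    simp only [linearizedPoly, prod_div_distrib, Fintype.prod_sum, prod_mul_distrib,
      prod_pow_eq_pow_sum, sum_div, mul_div_assoc]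
  have h_perm : Function.Injective fun σ : Equiv.Perm ι => t ∘ σ := fun σ τ h =>
    Equiv.ext fun j => t.injective (congrFun h j)
  simp only [h_expand, permanent, of_apply]
  rw [sum_comm, ← sum_neg_distrib]
  simp only [← mul_sum, sum_units_pow_div_pow, hF,
    sum_pow_modEq_iff (one_lt_of_card_eq_pow hF) t.injective]
  refine (Fintype.sum_of_injective _ h_perm _ _ (fun s hs => ?_) fun σ => ?_).symm
  · rw [if_neg fun ⟨σ, hσ⟩ => hs ⟨σ, hσ.symm⟩, mul_zero]
  · rw [if_pos ⟨σ, rfl⟩]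
    simp

theorem exists_linearizedPoly_ne_zero (hF : Fintype.card F = q ^ n) {a : Fin n → F} {i : Fin n}
    (hi : a i ≠ 0) : ∃ x, linearizedPoly q a x ≠ 0 := by
  classical
  by_contra! h
  have h_sum := sum_units_prod_linearizedPoly_div_pow hF (fun _ : Unit => a)
    ⟨fun _ => i, Function.injective_of_subsingleton _⟩
  exact hi (by simpa [h] using h_sum)

theorem permanent_submatrix_dicksonMatrix_eq_of_directions_eq (hF : Fintype.card F = q ^ n)
    {a b : Fin n → F} (hab : directions (linearizedPoly q a) = directions (linearizedPoly q b))
    {ι : Type*} [Fintype ι] [DecidableEq ι] (t : ι ↪ Fin n) :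
    ((dicksonMatrix q a).submatrix t t).permanent =
      ((dicksonMatrix q b).submatrix t t).permanent := by
  classical
  have h_minor (c : Fin n → F) : ((dicksonMatrix q c).submatrix t t).permanent =
      ∑ᶠ y ∈ directions (linearizedPoly q c), y ^ ∑ j, q ^ (t j : ℕ) := by
    have h_dir := sum_units_comp_div (AddMonoidHom.mk' _ (linearizedPoly_add hF c))
      fun y => y ^ ∑ j, q ^ (t j : ℕ)
    have h_perm := sum_units_prod_linearizedPoly_div_pow hF
      (fun j => (dicksonMatrix q c).col (t j)) t
    simp only [← linearizedPoly_pow hF, ← div_pow, prod_pow_eq_pow_sum] at h_perm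
    exact neg_injective (h_perm.symm.trans h_dir)
  rw [h_minor, h_minor, hab]

theorem exists_mul_coeff_eq_pow_of_directions_eq (hF : Fintype.card F = q ^ n) {a : Fin n → F}
    (h : directions (linearizedPoly q a) = directions (linearizedPoly q (1 : Fin n → F))) :
    ∃ l : F, l ≠ 0 ∧ ∀ j, l * a j = l ^ q ^ (j : ℕ) := by
  have h_minor (m : ℕ) (t : Fin m ↪ Fin n) :
      ((dicksonMatrix q a).submatrix t t).permanent = m ! := by
    rw [permanent_submatrix_dicksonMatrix_eq_of_directions_eq hF h]
    simp [permanent, dicksonMatrix, Fintype.card_perm]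
  obtain ⟨h_diag, h_mul⟩ :=
    diag_eq_one_and_mul_eq_of_permanent_submatrix fun m _ => h_minor m
  have ha : a 0 ≠ 0 := by
    have : a 0 = 1 := by simpa [dicksonMatrix] using h_diag 0
    simp [this]
  obtain ⟨x, hx⟩ := exists_linearizedPoly_ne_zero hF ha
  have h_eigen (j : Fin n) :
      linearizedPoly q a x ^ q ^ (j : ℕ) * a j = linearizedPoly q a x := by
    have h_col (i : Fin n) : dicksonMatrix q a i j * a j = a i := by
      simpa [dicksonMatrix] using h_mul i j 0
    rw [linearizedPoly_pow hF, linearizedPoly, linearizedPoly, sum_mul]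
    exact sum_congr rfl fun i _ => by rw [mul_right_comm, col_apply, h_col]
  refine ⟨(linearizedPoly q a x)⁻¹, inv_ne_zero hx, fun j => ?_⟩
  rw [inv_pow, inv_mul_eq_iff_eq_mul₀ hx, ← div_eq_mul_inv, eq_div_iff (pow_ne_zero _ hx),
    mul_comm, h_eigen]

end LinearizedPolynomial

/-- a q-polynomial `f` defines the same linear set of PG(1,q^n) as the trace
function `Tr_{q^n/q}` if and only if `λ f(x) = Tr(λ x)` for some nonzero `λ`. -/
theorem stmt_2 (p e n q : ℕ) (hp : p.Prime) (he : 0 < e) (hn : 0 < n) (hq : q = p ^ e)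
    (F : Type) [Field F] [Fintype F] (hF : Fintype.card F = q ^ n)
    (a : ℕ → F) (f : F → F)
    (hf : ∀ x : F, f x = ∑ i ∈ Finset.range n, a i * x ^ q ^ i) :
    {y : F | ∃ x : F, x ≠ 0 ∧ f x / x = y}
        = {y : F | ∃ x : F, x ≠ 0 ∧ (∑ i ∈ Finset.range n, x ^ q ^ i) / x = y}
      ↔ ∃ l : F, l ≠ 0 ∧ ∀ x : F, l * f x = ∑ i ∈ Finset.range n, (l * x) ^ q ^ i := by
  have : NeZero n := ⟨hn.ne'⟩
  have hf' : f = linearizedPoly q fun i : Fin n => a i := funext fun x =>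
    (hf x).trans (Fin.sum_univ_eq_sum_range (fun i => a i * x ^ q ^ i) n).symm
  have h_trace (x : F) :
      ∑ i ∈ Finset.range n, x ^ q ^ i = linearizedPoly q (1 : Fin n → F) x := by
    simp [linearizedPoly, Fin.sum_univ_eq_sum_range fun i => x ^ q ^ i]
  simp only [h_trace]
  change directions f = directions (linearizedPoly q (1 : Fin n → F)) ↔ _
  refine ⟨fun h => ?_, fun ⟨l, hl, h⟩ => directions_eq_of_forall_mul_eq hl h⟩
  obtain ⟨l, hl, hla⟩ := exists_mul_coeff_eq_pow_of_directions_eq hF (hf' ▸ h)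
  refine ⟨l, hl, fun x => ?_⟩
  simp [hf', linearizedPoly, mul_sum, mul_pow, ← hla, mul_assoc]
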